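/- arXiv:2602.06481 — 3 statements merged into one kernel-verified Lean document; each statement's English description precedes it below -/
import Mathlib

section
/- There exists a universal constant C > 0 (independent of ℓ₁ and ℓ₂) with the following property. For all ℓ₁ ≥ ℓ₂ > 0, every integer M ≥ 1, and every configuration (x₁, …, x_M) ∈ (ℝ³)^M, one has ∑ 1(|x_i − x_j| ≤ ℓ₁) 1(|x_i − x_k| ≤ ℓ₁) 1(|x_i − x_l| ≤ ℓ₁) 1(|x_i − x_m| ≤ ℓ₁) ≤ C (ℓ₁/ℓ₂)^{12} M + C M (ℓ₁/ℓ₂)³ ∑ 1(|x_i − x_j| ≤ ℓ₂) 1(|x_i − x_k| ≤ ℓ₁) 1(|x_i − x_l| ≤ ℓ₁), where the first sum runs over quintuples (i,j,k,l,m) of pairwise distinct indices in {1,…,M} and the second over quadruples (i,j,k,l) of pairwise distinct indices in {1,…,M}. -/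
noncomputable section

local notation "E3" => EuclideanSpace ℝ (Fin 3)

open Finset

/-- The index of the cube of side `ℓ / 2` (in the grid through the origin) containing `x`. -/
def cellIndex (ℓ : ℝ) (x : E3) : Fin 3 → ℤ := fun a => ⌊2 * x a / ℓ⌋

lemma dist_le_of_cellIndex_eq {ℓ : ℝ} (hℓ : 0 < ℓ) {x y : E3}
    (h : cellIndex ℓ x = cellIndex ℓ y) : dist x y ≤ ℓ := by
  have key : ∀ a, (dist (x a) (y a)) ^ 2 ≤ ℓ ^ 2 / 4 := by
    intro a
    have h1 : |2 * x a / ℓ - 2 * y a / ℓ| < 1 := Int.abs_sub_lt_one_of_floor_eq_floor (congrFun h a)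
    have h2 : 2 * x a / ℓ - 2 * y a / ℓ = (x a - y a) * 2 / ℓ := by ring
    rw [h2, abs_lt, lt_div_iff₀ hℓ, div_lt_iff₀ hℓ] at h1
    rw [Real.dist_eq, sq_abs]
    nlinarith
  rw [EuclideanSpace.dist_eq, Fin.sum_univ_three]
  refine Real.sqrt_le_iff.2 ⟨hℓ.le, ?_⟩
  nlinarith [key 0, key 1, key 2, sq_nonneg ℓ]

/-- The displacements between cubes of side `ℓ / 2` containing points at distance at most `ℓ`. -/
def cellShifts : Finset (Fin 3 → ℤ) := Fintype.piFinset fun _ => Icc (-2) 2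

lemma cellShifts_nonempty : cellShifts.Nonempty :=
  ⟨0, by simp [cellShifts]⟩

lemma cellIndex_sub_mem_cellShifts {ℓ : ℝ} (hℓ : 0 < ℓ) {x y : E3} (h : dist x y ≤ ℓ) :
    cellIndex ℓ y - cellIndex ℓ x ∈ cellShifts := by
  refine Fintype.mem_piFinset.2 fun a => ?_
  have h1 : |x a - y a| ≤ ℓ := by
    have := PiLp.norm_apply_le (x - y) a
    rw [dist_eq_norm] at h
    simpa using this.trans h
  have h2 : |2 * y a / ℓ - 2 * x a / ℓ| ≤ 2 := by
    have : 2 * y a / ℓ - 2 * x a / ℓ = (y a - x a) * 2 / ℓ := by ring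
    rw [this, abs_le, le_div_iff₀ hℓ, div_le_iff₀ hℓ]
    constructor <;> linarith [abs_le.1 h1]
  have hy := Int.floor_le (2 * y a / ℓ)
  have hy' := Int.lt_floor_add_one (2 * y a / ℓ)
  have hx := Int.floor_le (2 * x a / ℓ)
  have hx' := Int.lt_floor_add_one (2 * x a / ℓ)
  rw [abs_le] at h2
  simp only [Pi.sub_apply, cellIndex, mem_Icc]
  have u1 : ((-3 : ℤ) : ℝ) < ((⌊2 * y a / ℓ⌋ - ⌊2 * x a / ℓ⌋ : ℤ) : ℝ) := by
    push_cast; linarith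
  have u2 : ((⌊2 * y a / ℓ⌋ - ⌊2 * x a / ℓ⌋ : ℤ) : ℝ) < ((3 : ℤ) : ℝ) := by
    push_cast; linarith
  rw [Int.cast_lt] at u1 u2
  omega

/-- A cube of the coarse grid meets at most `27 (ℓ₁ / ℓ₂) ^ 3` cubes of the fine grid. -/
lemma exists_finset_cellIndex_mem {ℓ₁ ℓ₂ : ℝ} (h₂ : 0 < ℓ₂) (h : ℓ₂ ≤ ℓ₁) (P : Fin 3 → ℤ) :
    ∃ T : Finset (Fin 3 → ℤ), (#T : ℝ) ≤ 27 * (ℓ₁ / ℓ₂) ^ 3 ∧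
      ∀ x : E3, cellIndex ℓ₁ x = P → cellIndex ℓ₂ x ∈ T := by
  have h₁ : 0 < ℓ₁ := h₂.trans_le h
  have hr : 1 ≤ ℓ₁ / ℓ₂ := (one_le_div h₂).2 h
  set r := ℓ₁ / ℓ₂ with hr_def
  refine ⟨Fintype.piFinset fun a => Icc ⌊P a * r⌋ ⌊(P a + 1) * r⌋, ?_, ?_⟩
  · have hc : ∀ a, (#(Icc ⌊P a * r⌋ ⌊(P a + 1) * r⌋) : ℝ) ≤ 3 * r := by
      intro a
      have hle : ⌊P a * r⌋ ≤ ⌊(P a + 1) * r⌋ := Int.floor_le_floor (by nlinarith)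
      have hcast : ((#(Icc ⌊P a * r⌋ ⌊(P a + 1) * r⌋) : ℤ) : ℝ)
          = ((⌊(P a + 1) * r⌋ + 1 - ⌊P a * r⌋ : ℤ) : ℝ) := by
        rw [Int.card_Icc_of_le _ _ (by omega)]
      push_cast at hcast
      rw [hcast]
      linarith [Int.floor_le ((P a + 1) * r), Int.lt_floor_add_one (P a * r)]
    rw [Fintype.card_piFinset, Nat.cast_prod]
    calc _ ≤ ∏ _a : Fin 3, 3 * r := prod_le_prod (fun _ _ => by positivity) fun a _ => hc a
      _ = 27 * r ^ 3 := by simp; ring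
  · intro x hx
    refine Fintype.mem_piFinset.2 fun a => ?_
    have hP : ⌊2 * x a / ℓ₁⌋ = P a := congrFun hx a
    have e : 2 * x a / ℓ₂ = 2 * x a / ℓ₁ * r := by rw [hr_def]; field_simp
    have l1 : (P a : ℝ) ≤ 2 * x a / ℓ₁ := hP ▸ Int.floor_le _
    have l2 : 2 * x a / ℓ₁ < P a + 1 := hP ▸ Int.lt_floor_add_one _
    simp only [cellIndex, mem_Icc, e]
    exact ⟨Int.floor_le_floor (by gcongr), Int.floor_le_floor (by gcongr)⟩

/-- If `q` takes at most `#T` values on `s`, many pairs in `s` share a value of `q`. -/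
lemma sq_card_le_card_mul_sum_card_fiber {ι κ : Type*} [DecidableEq κ] (s : Finset ι) (q : ι → κ)
    (T : Finset κ) (hT : ∀ i ∈ s, q i ∈ T) :
    (#s : ℝ) ^ 2 ≤ #T * ∑ i ∈ s, (#{j ∈ s | q j = q i} : ℝ) := by
  have h1 : (#s : ℝ) = ∑ c ∈ T, (#{j ∈ s | q j = c} : ℝ) := by
    exact_mod_cast card_eq_sum_card_fiberwise hT
  have h2 : ∑ i ∈ s, (#{j ∈ s | q j = q i} : ℝ) = ∑ c ∈ T, (#{j ∈ s | q j = c} : ℝ) ^ 2 := by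
    rw [← sum_fiberwise_of_maps_to' hT fun c => (#{j ∈ s | q j = c} : ℝ)]
    simp [sq]
  rw [h1, h2]
  exact sq_sum_le_card_mul_sum_sq

/-- Shifting the cells does not increase the fourth moment of the occupation numbers by more than
a factor of two. -/
lemma sum_card_fiber_add_pow_le {ι G : Type*} [Fintype ι] [AddGroup G] [DecidableEq G]
    (p : ι → G) (d : G) :
    ∑ i, (#{j | p j = d + p i} : ℝ) ^ 4 ≤ 2 * ∑ i, (#{j | p j = p i} : ℝ) ^ 4 := by
  set N : G → ℝ := fun P => (#{j | p j = P} : ℝ) with hN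
  have hN0 : ∀ P, 0 ≤ N P := fun P => by positivity
  have hfib : ∀ f : G → ℝ, ∑ i, f (p i) = ∑ P ∈ univ.image p, N P * f P := by
    intro f
    rw [sum_comp]
    simp [hN]
  have hshift : ∑ P ∈ univ.image p, N (d + P) ^ 5 ≤ ∑ P ∈ univ.image p, N P ^ 5 := by
    have := sum_map (univ.image p) (addLeftEmbedding d) fun P => N P ^ 5
    simp only [addLeftEmbedding_apply] at this
    rw [← this]
    rw [← sum_filter_ne_zero]
    refine sum_le_sum_of_subset_of_nonneg (fun P hP => ?_) fun P _ _ => pow_nonneg (hN0 P) 5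
    replace hP := (mem_filter.1 hP).2
    have : (filter (fun j => p j = P) univ).Nonempty := by
      rw [nonempty_iff_ne_empty]
      intro h0
      simp [hN, h0] at hP
    obtain ⟨j, hj⟩ := this
    exact mem_image.2 ⟨j, mem_univ _, (mem_filter.1 hj).2⟩
  have hyoung : ∀ a b : ℝ, 0 ≤ a → 0 ≤ b → a * b ^ 4 ≤ a ^ 5 + b ^ 5 := by
    intro a b ha hb
    rcases le_total a b with hab | hab
    · calc a * b ^ 4 ≤ b * b ^ 4 := by gcongr
        _ ≤ a ^ 5 + b ^ 5 := by linarith [pow_nonneg ha 5]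
    · calc a * b ^ 4 ≤ a * a ^ 4 := by gcongr
        _ ≤ a ^ 5 + b ^ 5 := by linarith [pow_nonneg hb 5]
  calc ∑ i, N (d + p i) ^ 4 = ∑ P ∈ univ.image p, N P * N (d + P) ^ 4 :=
        hfib fun P => N (d + P) ^ 4
    _ ≤ ∑ P ∈ univ.image p, (N P ^ 5 + N (d + P) ^ 5) :=
        sum_le_sum fun P _ => hyoung _ _ (hN0 _) (hN0 _)
    _ ≤ 2 * ∑ P ∈ univ.image p, N P ^ 5 := by rw [sum_add_distrib]; linarith
    _ = 2 * ∑ i, N (p i) ^ 4 := by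
        rw [hfib fun P => N P ^ 4]
        congr 1
        exact sum_congr rfl fun P _ => by ring

/-- The number of ordered pairs of distinct elements of `s` avoiding two given ones. -/
lemma sum_sum_distinct_eq {ι : Type*} [Fintype ι] [DecidableEq ι] (s : Finset ι) {i j : ι}
    (hi : i ∈ s) (hj : j ∈ s) (hij : i ≠ j) :
    ∑ k, ∑ l, (if k ∈ s ∧ l ∈ s ∧ [i, j, k, l].Nodup then (1 : ℝ) else 0)
      = ((#s : ℝ) - 2) * ((#s : ℝ) - 3) := by
  set t := (s.erase i).erase j with ht
  have hcard : #t + 2 = #s := by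
    have h1 := card_erase_add_one hi
    have h2 := card_erase_add_one (mem_erase.2 ⟨hij.symm, hj⟩)
    rw [ht]
    omega
  have hcard' : (#t : ℝ) = #s - 2 := by
    rw [← hcard]; push_cast; ring
  have hoff : (#t.offDiag : ℝ) = #t * #t - #t := by
    rw [offDiag_card, Nat.cast_sub (Nat.le_mul_self _)]
    push_cast; ring
  rw [← Fintype.sum_prod_type', sum_boole]
  have : (univ.filter fun z : ι × ι => z.1 ∈ s ∧ z.2 ∈ s ∧ [i, j, z.1, z.2].Nodup)
      = t.offDiag := by
    ext ⟨k, l⟩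
    simp [ht, hij]
    grind
  rw [this, hoff, hcard']
  ring

lemma sum_five_body_le {M : ℕ} (x : Fin M → E3) (ℓ : ℝ) :
    (∑ i : Fin M, ∑ j : Fin M, ∑ k : Fin M, ∑ l : Fin M, ∑ m : Fin M,
          if ([i, j, k, l, m] : List (Fin M)).Nodup ∧
              dist (x i) (x j) ≤ ℓ ∧ dist (x i) (x k) ≤ ℓ ∧
              dist (x i) (x l) ≤ ℓ ∧ dist (x i) (x m) ≤ ℓ
            then (1 : ℝ) else 0)
      ≤ ∑ i, (#{j | dist (x i) (x j) ≤ ℓ} : ℝ) ^ 4 := by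
  refine sum_le_sum fun i _ => ?_
  set f : Fin M → ℝ := fun j => if dist (x i) (x j) ≤ ℓ then 1 else 0 with hf
  have hcard : (#{j | dist (x i) (x j) ≤ ℓ} : ℝ) = ∑ j, f j := by simp [hf]
  calc _ ≤ ∑ j, ∑ k, ∑ l, ∑ m, f j * (f k * (f l * f m)) := by
        gcongr with j _ k _ l _ m _
        simp only [hf]
        split_ifs <;> simp_all
    _ = _ := by
        rw [hcard]
        simp only [← mul_sum, ← sum_mul]
        ring

lemma sum_card_near_pow_le {M : ℕ} (x : Fin M → E3) {ℓ : ℝ} (hℓ : 0 < ℓ) :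
    ∑ i, (#{j | dist (x i) (x j) ≤ ℓ} : ℝ) ^ 4
      ≤ 2 * (#cellShifts : ℝ) ^ 4 * ∑ i, (#{j | cellIndex ℓ (x j) = cellIndex ℓ (x i)} : ℝ) ^ 4 := by
  set p : Fin M → Fin 3 → ℤ := fun i => cellIndex ℓ (x i)
  have hnear : ∀ i, (#{j | dist (x i) (x j) ≤ ℓ} : ℝ)
      ≤ ∑ d ∈ cellShifts, (#{j | p j = d + p i} : ℝ) := by
    intro i
    have hsub : ({j | dist (x i) (x j) ≤ ℓ} : Finset (Fin M))
        ⊆ cellShifts.biUnion fun d => {j | p j = d + p i} := by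
      intro j hj
      have hd : p j - p i ∈ cellShifts := cellIndex_sub_mem_cellShifts hℓ (mem_filter.1 hj).2
      rw [mem_biUnion]
      exact ⟨p j - p i, hd, by simp⟩
    rw [← Nat.cast_sum]
    exact Nat.cast_le.2 ((card_le_card hsub).trans card_biUnion_le)
  calc ∑ i, (#{j | dist (x i) (x j) ≤ ℓ} : ℝ) ^ 4
      ≤ ∑ i, (#cellShifts : ℝ) ^ 3 * ∑ d ∈ cellShifts, (#{j | p j = d + p i} : ℝ) ^ 4 := by
        refine sum_le_sum fun i _ => (pow_le_pow_left₀ (by positivity) (hnear i) 4).trans ?_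
        exact pow_sum_le_card_mul_sum_pow (s := cellShifts)
          (f := fun d => (#{j | p j = d + p i} : ℝ)) (fun _ _ => by positivity) 3
    _ = (#cellShifts : ℝ) ^ 3 * ∑ d ∈ cellShifts, ∑ i, (#{j | p j = d + p i} : ℝ) ^ 4 := by
        rw [← mul_sum, sum_comm]
    _ ≤ (#cellShifts : ℝ) ^ 3 * ∑ _d ∈ cellShifts, 2 * ∑ i, (#{j | p j = p i} : ℝ) ^ 4 := by
        gcongr with d _
        exact sum_card_fiber_add_pow_le p d
    _ = _ := by
        rw [sum_const, nsmul_eq_mul]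
        ring

lemma le_sum_four_body {M : ℕ} (x : Fin M → E3) {ℓ₁ ℓ₂ : ℝ} (h₁ : 0 < ℓ₁) (h₂ : 0 < ℓ₂) :
    ∑ i, ((#{j | cellIndex ℓ₁ (x j) = cellIndex ℓ₁ (x i) ∧
            cellIndex ℓ₂ (x j) = cellIndex ℓ₂ (x i)} : ℝ) - 1) *
        (((#{j | cellIndex ℓ₁ (x j) = cellIndex ℓ₁ (x i)} : ℝ) - 2) *
          ((#{j | cellIndex ℓ₁ (x j) = cellIndex ℓ₁ (x i)} : ℝ) - 3))
      ≤ ∑ i : Fin M, ∑ j : Fin M, ∑ k : Fin M, ∑ l : Fin M,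
              if ([i, j, k, l] : List (Fin M)).Nodup ∧
                  dist (x i) (x j) ≤ ℓ₂ ∧ dist (x i) (x k) ≤ ℓ₁ ∧
                  dist (x i) (x l) ≤ ℓ₁
                then (1 : ℝ) else 0 := by
  refine sum_le_sum fun i _ => ?_
  set s : Finset (Fin M) := {j | cellIndex ℓ₁ (x j) = cellIndex ℓ₁ (x i)} with hs
  set t : Finset (Fin M) := {j | cellIndex ℓ₁ (x j) = cellIndex ℓ₁ (x i) ∧
            cellIndex ℓ₂ (x j) = cellIndex ℓ₂ (x i)} with ht
  have hi : i ∈ s := by simp [hs]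
  have hit : i ∈ t := by simp [ht]
  have hcard : (#t : ℝ) - 1 = #(t.erase i) := by
    rw [← card_erase_add_one hit]; push_cast; ring
  rw [hcard, ← nsmul_eq_mul, ← sum_const]
  refine le_trans ?_ (sum_le_sum_of_subset_of_nonneg (subset_univ (t.erase i)) fun j _ _ =>
    sum_nonneg fun k _ => sum_nonneg fun l _ => by split_ifs <;> norm_num)
  refine sum_le_sum fun j hj => ?_
  obtain ⟨hji, hjt⟩ := mem_erase.1 hj
  have hj' := (mem_filter.1 hjt).2
  rw [← sum_sum_distinct_eq s hi (by simp [hs, hj'.1]) hji.symm]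
  gcongr with k _ l _
  split_ifs with ha hb
  · rfl
  · refine absurd ⟨ha.2.2, ?_, ?_, ?_⟩ hb
    · exact dist_le_of_cellIndex_eq h₂ hj'.2.symm
    · exact dist_le_of_cellIndex_eq h₁ (mem_filter.1 ha.1).2.symm
    · exact dist_le_of_cellIndex_eq h₁ (mem_filter.1 ha.2.1).2.symm
  · norm_num
  · rfl

/-- The single-cell estimate: `n` is the number of particles in the cell, `R` bounds the number of
subcells, and `D` is the sum over the particles of the occupation number of their subcell. -/
lemma pow_five_le_of_sq_le_mul {n R M D : ℝ} (hn : 0 ≤ n) (hnM : n ≤ M) (hR : 27 ≤ R)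
    (hD : n ^ 2 ≤ R * D) (hpair : 0 ≤ (D - n) * ((n - 2) * (n - 3))) :
    n ^ 5 ≤ (2 * R) ^ 4 * n + 8 * R * M * ((D - n) * ((n - 2) * (n - 3))) := by
  have hM : 0 ≤ M := hn.trans hnM
  rcases le_total n (2 * R) with h | h
  · have h1 : n ^ 4 * n ≤ (2 * R) ^ 4 * n := by gcongr
    have h2 : 0 ≤ 8 * R * M * ((D - n) * ((n - 2) * (n - 3))) := by positivity
    linarith
  · have h1 : n ^ 2 ≤ 2 * R * (D - n) := by nlinarith
    have h2 : n ^ 2 ≤ 4 * ((n - 2) * (n - 3)) := by nlinarith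
    have h3 : n ^ 2 * n ^ 2 ≤ (2 * R * (D - n)) * (4 * ((n - 2) * (n - 3))) :=
      mul_le_mul h1 h2 (sq_nonneg n) ((sq_nonneg n).trans h1)
    have h4 : n * (n ^ 2 * n ^ 2) ≤ M * ((2 * R * (D - n)) * (4 * ((n - 2) * (n - 3)))) :=
      mul_le_mul hnM h3 (by positivity) hM
    have h5 : 0 ≤ (2 * R) ^ 4 * n := by positivity
    linarith

lemma sum_card_cell_pow_le {M : ℕ} (x : Fin M → E3) {ℓ₁ ℓ₂ : ℝ} (h₂ : 0 < ℓ₂) (h : ℓ₂ ≤ ℓ₁) :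
    ∑ i, (#{j | cellIndex ℓ₁ (x j) = cellIndex ℓ₁ (x i)} : ℝ) ^ 4
      ≤ (54 * (ℓ₁ / ℓ₂) ^ 3) ^ 4 * M + 216 * M * (ℓ₁ / ℓ₂) ^ 3 *
        ∑ i, ((#{j | cellIndex ℓ₁ (x j) = cellIndex ℓ₁ (x i) ∧
            cellIndex ℓ₂ (x j) = cellIndex ℓ₂ (x i)} : ℝ) - 1) *
        (((#{j | cellIndex ℓ₁ (x j) = cellIndex ℓ₁ (x i)} : ℝ) - 2) *
          ((#{j | cellIndex ℓ₁ (x j) = cellIndex ℓ₁ (x i)} : ℝ) - 3)) := by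
  have hr : 1 ≤ ℓ₁ / ℓ₂ := (one_le_div h₂).2 h
  set r := ℓ₁ / ℓ₂
  set p : Fin M → Fin 3 → ℤ := fun i => cellIndex ℓ₁ (x i)
  set q : Fin M → Fin 3 → ℤ := fun i => cellIndex ℓ₂ (x i)
  have hmaps : ∀ i ∈ (univ : Finset (Fin M)), p i ∈ univ.image p := fun i _ =>
    mem_image_of_mem _ (mem_univ i)
  have hM : (M : ℝ) = ∑ _i : Fin M, (1 : ℝ) := by simp
  conv_rhs => enter [1, 2]; rw [hM]
  rw [mul_sum, mul_sum, ← sum_add_distrib, ← sum_fiberwise_of_maps_to hmaps,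
    ← sum_fiberwise_of_maps_to hmaps]
  refine sum_le_sum fun P _ => ?_
  set s : Finset (Fin M) := {i | p i = P} with hs
  have hcell : ∀ i ∈ s, ({j | p j = p i} : Finset (Fin M)) = s := fun i hi => by
    rw [(mem_filter.1 hi).2]
  have hsub : ∀ i ∈ s, ({j | p j = p i ∧ q j = q i} : Finset (Fin M)) = {j ∈ s | q j = q i} :=
    fun i hi => by rw [← hcell i hi, filter_filter]
  obtain ⟨T, hT, hmem⟩ := exists_finset_cellIndex_mem h₂ h P
  set D := ∑ i ∈ s, (#{j ∈ s | q j = q i} : ℝ) with hD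
  have hsq : (#s : ℝ) ^ 2 ≤ 27 * r ^ 3 * D :=
    (sq_card_le_card_mul_sum_card_fiber s q T fun i hi => hmem _ (mem_filter.1 hi).2).trans
      (mul_le_mul_of_nonneg_right hT (sum_nonneg fun _ _ => Nat.cast_nonneg _))
  have hDn : (#s : ℝ) ≤ D := by
    rw [card_eq_sum_ones, Nat.cast_sum]
    refine sum_le_sum fun i hi => ?_
    exact_mod_cast card_pos.2 ⟨i, by simp [hi]⟩
  have hpair : 0 ≤ (D - #s) * (((#s : ℝ) - 2) * ((#s : ℝ) - 3)) := by
    refine mul_nonneg (sub_nonneg.2 hDn) ?_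
    rcases le_or_gt #s 2 with h3 | h3
    · have : (#s : ℝ) ≤ 2 := by exact_mod_cast h3
      nlinarith
    · have : (3 : ℝ) ≤ #s := by exact_mod_cast h3
      nlinarith
  have key := pow_five_le_of_sq_le_mul (n := #s) (R := 27 * r ^ 3) (M := M) (D := D)
    (by positivity) (by exact_mod_cast (card_le_univ s).trans_eq (Fintype.card_fin M))
    (by nlinarith [one_le_pow₀ hr (n := 3)]) hsq hpair
  calc ∑ i ∈ s, (#{j | p j = p i} : ℝ) ^ 4 = (#s : ℝ) ^ 5 := by
        rw [sum_congr rfl fun i hi => by rw [hcell i hi], sum_const, nsmul_eq_mul]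
        ring
    _ ≤ _ := key
    _ = ∑ i ∈ s, ((54 * r ^ 3) ^ 4 * 1 + 216 * M * r ^ 3 *
          (((#{j ∈ s | q j = q i} : ℝ) - 1) * (((#s : ℝ) - 2) * ((#s : ℝ) - 3)))) := by
        rw [sum_add_distrib, ← mul_sum, ← mul_sum, ← sum_mul, sum_sub_distrib, ← hD]
        simp only [sum_const, nsmul_eq_mul, mul_one]
        ring
    _ = _ := sum_congr rfl fun i hi => by rw [hcell i hi, hsub i hi]

/-- Five-body estimate: a five-body interaction of range `ℓ₁` is controlled,
configuration by configuration, by the number of particles and a four-body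
interaction with one pair at the shorter range `ℓ₂`. -/
theorem five_body_estimate :
    ∃ C > 0, ∀ ℓ₁ ℓ₂ : ℝ, 0 < ℓ₂ → ℓ₂ ≤ ℓ₁ → ∀ M : ℕ, 1 ≤ M →
      ∀ x : Fin M → E3,
      (∑ i : Fin M, ∑ j : Fin M, ∑ k : Fin M, ∑ l : Fin M, ∑ m : Fin M,
          if ([i, j, k, l, m] : List (Fin M)).Nodup ∧
              dist (x i) (x j) ≤ ℓ₁ ∧ dist (x i) (x k) ≤ ℓ₁ ∧
              dist (x i) (x l) ≤ ℓ₁ ∧ dist (x i) (x m) ≤ ℓ₁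
            then (1 : ℝ) else 0)
      ≤ C * (ℓ₁ / ℓ₂) ^ 12 * M
        + C * M * (ℓ₁ / ℓ₂) ^ 3 *
            (∑ i : Fin M, ∑ j : Fin M, ∑ k : Fin M, ∑ l : Fin M,
              if ([i, j, k, l] : List (Fin M)).Nodup ∧
                  dist (x i) (x j) ≤ ℓ₂ ∧ dist (x i) (x k) ≤ ℓ₁ ∧
                  dist (x i) (x l) ≤ ℓ₁
                then (1 : ℝ) else 0) := by
  refine ⟨2 * (#cellShifts : ℝ) ^ 4 * 8503056, ?_, fun ℓ₁ ℓ₂ h₂ h M _ x => ?_⟩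
  · have := cellShifts_nonempty.card_pos
    positivity
  have h₁ : 0 < ℓ₁ := h₂.trans_le h
  have hr : 0 < ℓ₁ / ℓ₂ := div_pos h₁ h₂
  refine (sum_five_body_le x ℓ₁).trans ((sum_card_near_pow_le x h₁).trans ?_)
  have hcell := sum_card_cell_pow_le x h₂ h
  have hfour := le_sum_four_body x h₁ h₂
  set S := ∑ i : Fin M, ∑ j : Fin M, ∑ k : Fin M, ∑ l : Fin M,
    if ([i, j, k, l] : List (Fin M)).Nodup ∧ dist (x i) (x j) ≤ ℓ₂ ∧
      dist (x i) (x k) ≤ ℓ₁ ∧ dist (x i) (x l) ≤ ℓ₁ then (1 : ℝ) else 0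
  have hS : 0 ≤ S := sum_nonneg fun i _ => sum_nonneg fun j _ => sum_nonneg fun k _ =>
    sum_nonneg fun l _ => by split_ifs <;> norm_num
  clear_value S
  set r := ℓ₁ / ℓ₂
  have hlast : (54 * r ^ 3) ^ 4 * M + 216 * M * r ^ 3 * S
      ≤ 8503056 * (r ^ 12 * M + M * r ^ 3 * S) := by
    have : 0 ≤ M * r ^ 3 * S := by positivity
    linarith
  have hcell' := hcell.trans (add_le_add_right
    (mul_le_mul_of_nonneg_left hfour (by positivity)) _) |>.trans hlast
  refine (mul_le_mul_of_nonneg_left hcell' (by positivity)).trans_eq ?_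
  ring
end
end

section
/- Let A : ℝ⁶ → ℝ⁶ be an invertible linear map with operator norms ‖A‖ ≤ 2 and ‖A^{−1}‖ ≤ 2. Then there exists a constant C > 0, depending only on these norm bounds (in particular independent of λ), such that for every λ > 0 and every measurable g : ℝ⁶ → ℝ satisfying |g(y)| ≤ λ^{−2} · 1(λ/2 ≤ |y| ≤ λ) · |y|^{−4} for almost every y, the functions u(x) := ∫_{ℝ⁶} g(y) |A(x − y)|^{−4} dy and v(x) := ∫_{ℝ⁶} g(y) A(x − y) |A(x − y)|^{−6} dy satisfy |u(x)| ≤ C/(λ⁴ + |x|⁴) and |v(x)| ≤ C/(λ⁵ + |x|⁵) for all x ∈ ℝ⁶. -/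
open MeasureTheory

noncomputable section

local notation "E6" => EuclideanSpace ℝ (Fin 6)

/-- The truncated power `‖y‖ ^ (-p) 1(‖y‖ ≤ R)` is integrable on `ℝ⁶` for `p ≤ 5`, with integral
at most `6 |B₁| R ^ (6 - p)`. -/
lemma integrable_and_integral_indicator_inv_pow_norm_le {p n : ℕ} (hpn : p + n = 5) {R : ℝ}
    (hR : 0 ≤ R) :
    Integrable (fun y : E6 => (Set.Iic R).indicator (fun r : ℝ => (r ^ p)⁻¹) ‖y‖) ∧
      ∫ y : E6, (Set.Iic R).indicator (fun r : ℝ => (r ^ p)⁻¹) ‖y‖ ≤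
        6 * (volume.real (Metric.ball (0 : E6) 1) * R ^ (n + 1)) := by
  have hdim : Module.finrank ℝ E6 = 6 := by simp
  have heq : Set.EqOn
      (fun y : ℝ => y ^ (6 - 1) • (Set.Iic R).indicator (fun r : ℝ => (r ^ p)⁻¹) y)
      ((Set.Iic R).indicator fun y : ℝ => y ^ n) (Set.Ioi 0) := by
    intro y (hy : 0 < y)
    by_cases hyR : y ∈ Set.Iic R
    · have hpow : y ^ 5 = y ^ n * y ^ p := by rw [← pow_add, ← hpn, add_comm]
      simp only [Set.indicator_of_mem hyR, smul_eq_mul, Nat.add_one_sub_one, hpow]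
      field_simp
    · simp [Set.indicator_of_notMem hyR]
  have hinter : Set.Ioi (0 : ℝ) ∩ Set.Iic R = Set.Ioc 0 R := Set.Ioi_inter_Iic
  constructor
  · rw [integrable_fun_norm_addHaar volume (f := (Set.Iic R).indicator fun r : ℝ => (r ^ p)⁻¹),
      hdim, integrableOn_congr_fun heq measurableSet_Ioi, IntegrableOn,
      integrable_indicator_iff measurableSet_Iic, IntegrableOn,
      Measure.restrict_restrict measurableSet_Iic, Set.inter_comm, hinter]
    exact (intervalIntegrable_iff_integrableOn_Ioc_of_le hR).1
      (Continuous.intervalIntegrable (by fun_prop) _ _)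
  · rw [integral_fun_norm_addHaar volume ((Set.Iic R).indicator fun r : ℝ => (r ^ p)⁻¹),
      hdim, setIntegral_congr_fun measurableSet_Ioi heq, setIntegral_indicator measurableSet_Iic,
      hinter, ← intervalIntegral.integral_of_le hR, integral_pow, nsmul_eq_mul, smul_eq_mul]
    push_cast
    gcongr
    rw [zero_pow (by omega), sub_zero]
    exact div_le_self (by positivity) (by linarith [n.cast_nonneg (α := ℝ)])

/-- Decay of the integral of a function dominated by the Riesz kernel of order `p ≤ 5` times the
normalized indicator of the ball of radius `lam`. -/
lemma norm_integral_le_of_norm_le_riesz_kernel {F : Type*} [NormedAddCommGroup F]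
    [NormedSpace ℝ F] {p n : ℕ} (hpn : p + n = 5) {c lam : ℝ} (hc : 0 ≤ c) (hlam : 0 < lam)
    (x : E6) {f : E6 → F}
    (hf : ∀ᵐ y : E6, ‖f y‖ ≤
      c * (lam ^ 6)⁻¹ * (Metric.closedBall 0 lam).indicator (fun y => (‖x - y‖ ^ p)⁻¹) y) :
    ‖∫ y, f y‖ ≤ c * (6 * volume.real (Metric.ball (0 : E6) 1) * 3 ^ (n + 1) * (2 * 2 ^ p)) /
      (lam ^ p + ‖x‖ ^ p) := by
  have hlam6 : lam ^ 6 = lam ^ (n + 1) * lam ^ p := by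
    rw [← pow_add]; congr 1; omega
  set V : ℝ := volume.real (Metric.ball (0 : E6) 1) with hV
  have hV0 : 0 ≤ V := measureReal_nonneg
  rw [le_div_iff₀ (by positivity)]
  rcases le_total ‖x‖ (2 * lam) with hx | hx
  · obtain ⟨hint, hle⟩ := integrable_and_integral_indicator_inv_pow_norm_le hpn
      (R := 3 * lam) (by positivity)
    have hbound : ∀ᵐ y : E6, ‖f y‖ ≤ c * (lam ^ 6)⁻¹ *
        (Set.Iic (3 * lam)).indicator (fun r : ℝ => (r ^ p)⁻¹) ‖x - y‖ := by
      filter_upwards [hf] with y hy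
      refine hy.trans ?_
      gcongr
      by_cases hyl : y ∈ Metric.closedBall (0 : E6) lam
      · have hyn : ‖y‖ ≤ lam := by simpa using hyl
        have hxy : ‖x - y‖ ∈ Set.Iic (3 * lam) := by
          have := norm_sub_le x y
          simp only [Set.mem_Iic]
          linarith
        rw [Set.indicator_of_mem hyl, Set.indicator_of_mem hxy]
      · rw [Set.indicator_of_notMem hyl]
        exact Set.indicator_apply_nonneg fun _ => by positivity
    have hnorm := norm_integral_le_of_norm_le ((hint.comp_sub_left x).const_mul _) hbound
    rw [integral_const_mul, integral_sub_left_eq_self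
      (fun y : E6 => (Set.Iic (3 * lam)).indicator (fun r : ℝ => (r ^ p)⁻¹) ‖y‖)] at hnorm
    have hden : lam ^ p + ‖x‖ ^ p ≤ 2 * 2 ^ p * lam ^ p := by
      have h1 : ‖x‖ ^ p ≤ 2 ^ p * lam ^ p := by rw [← mul_pow]; gcongr
      have h2 : 1 * lam ^ p ≤ 2 ^ p * lam ^ p := by gcongr; exact one_le_pow₀ (by norm_num)
      linarith
    calc ‖∫ y, f y‖ * (lam ^ p + ‖x‖ ^ p)
        ≤ c * (lam ^ 6)⁻¹ * (6 * (V * (3 * lam) ^ (n + 1))) * (2 * 2 ^ p * lam ^ p) := by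
          gcongr
          exact hnorm.trans (by gcongr)
      _ = c * (6 * V * 3 ^ (n + 1) * (2 * 2 ^ p)) := by
          rw [hlam6, mul_pow]; field_simp
  · have hx0 : 0 < ‖x‖ := by linarith
    have hbound : ∀ᵐ y : E6, ‖f y‖ ≤ c * (lam ^ 6)⁻¹ *
        (Metric.closedBall (0 : E6) lam).indicator (fun _ => ((‖x‖ / 2) ^ p)⁻¹) y := by
      filter_upwards [hf] with y hy
      refine hy.trans (mul_le_mul_of_nonneg_left ?_ (by positivity))
      by_cases hyl : y ∈ Metric.closedBall (0 : E6) lam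
      · have hyn : ‖y‖ ≤ lam := by simpa using hyl
        rw [Set.indicator_of_mem hyl, Set.indicator_of_mem hyl]
        gcongr
        linarith [norm_sub_norm_le x y]
      · rw [Set.indicator_of_notMem hyl, Set.indicator_of_notMem hyl]
    have hint : Integrable
        ((Metric.closedBall (0 : E6) lam).indicator fun _ => ((‖x‖ / 2) ^ p)⁻¹) :=
      (integrable_indicator_iff Metric.isClosed_closedBall.measurableSet).2
        (integrableOn_const (measure_closedBall_lt_top.ne))
    have hnorm := norm_integral_le_of_norm_le (hint.const_mul _) hbound
    rw [integral_const_mul, integral_indicator Metric.isClosed_closedBall.measurableSet,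
      setIntegral_const, Measure.addHaar_real_closedBall _ _ hlam.le, ← hV, smul_eq_mul,
      finrank_euclideanSpace_fin] at hnorm
    have hden : lam ^ p + ‖x‖ ^ p ≤ 2 * ‖x‖ ^ p := by
      have : lam ^ p ≤ ‖x‖ ^ p := by gcongr; linarith
      linarith
    calc ‖∫ y, f y‖ * (lam ^ p + ‖x‖ ^ p)
        ≤ c * (lam ^ 6)⁻¹ * (lam ^ 6 * V * ((‖x‖ / 2) ^ p)⁻¹) * (2 * ‖x‖ ^ p) := by
          gcongr
      _ = c * (1 * V * 1 * (2 * 2 ^ p)) := by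
          rw [div_pow]; field_simp
      _ ≤ c * (6 * V * 3 ^ (n + 1) * (2 * 2 ^ p)) := by
          gcongr
          · norm_num
          · exact one_le_pow₀ (by norm_num)

/-- The pointwise bound on the density `g` in terms of the normalized indicator of a ball. -/
lemma shell_bound_le_indicator {lam : ℝ} (hlam : 0 < lam) (y : E6) :
    (lam ^ 2)⁻¹ * (if lam / 2 ≤ ‖y‖ ∧ ‖y‖ ≤ lam then 1 else 0) * (‖y‖ ^ 4)⁻¹ ≤
      16 * (lam ^ 6)⁻¹ * (Metric.closedBall (0 : E6) lam).indicator 1 y := by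
  split_ifs with hy
  · rw [Set.indicator_of_mem (by simpa using hy.2)]
    calc (lam ^ 2)⁻¹ * 1 * (‖y‖ ^ 4)⁻¹ ≤ (lam ^ 2)⁻¹ * 1 * ((lam / 2) ^ 4)⁻¹ := by
          gcongr
          exact hy.1
      _ = 16 * (lam ^ 6)⁻¹ * (1 : E6 → ℝ) y := by
          simp only [Pi.one_apply]
          field_simp
          norm_num
  · rw [mul_zero, zero_mul]
    exact mul_nonneg (by positivity) (Set.indicator_apply_nonneg fun _ => zero_le_one)

/-- If `‖A⁻¹‖ ≤ 2` then `‖A z‖ ^ (-p) ≤ 2 ^ p ‖z‖ ^ (-p)`. -/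
lemma inv_pow_norm_apply_le (A : E6 ≃L[ℝ] E6) (hA : ‖(A.symm : E6 →L[ℝ] E6)‖ ≤ 2) (p : ℕ)
    (z : E6) : (‖A z‖ ^ p)⁻¹ ≤ 2 ^ p * (‖z‖ ^ p)⁻¹ := by
  rcases eq_or_ne z 0 with rfl | hz
  · rcases p.eq_zero_or_pos with rfl | hp
    · simp
    · simp [hp.ne']
  · have hz0 : 0 < ‖z‖ := norm_pos_iff.2 hz
    have hle : ‖z‖ ≤ 2 * ‖A z‖ := by
      simpa using (A.symm : E6 →L[ℝ] E6).le_of_opNorm_le hA (A z)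
    calc (‖A z‖ ^ p)⁻¹ ≤ ((‖z‖ / 2) ^ p)⁻¹ := by
          gcongr
          linarith
      _ = 2 ^ p * (‖z‖ ^ p)⁻¹ := by
          rw [div_pow]; field_simp

/-- Decay of the integral of `f` when `‖f y‖ ≤ |g y| ‖A (x - y)‖ ^ (-p)` with `p ≤ 5` and `g`
bounded by `lam ^ (-2) |y| ^ (-4)` on the shell `lam / 2 ≤ |y| ≤ lam`. -/
lemma norm_integral_le_of_norm_le_shell_density {F : Type*} [NormedAddCommGroup F]
    [NormedSpace ℝ F] {p n : ℕ} (hpn : p + n = 5) (A : E6 ≃L[ℝ] E6)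
    (hA : ‖(A.symm : E6 →L[ℝ] E6)‖ ≤ 2) {lam : ℝ} (hlam : 0 < lam) {g : E6 → ℝ}
    (hg : ∀ᵐ y ∂(volume : Measure E6), |g y| ≤ (lam ^ 2)⁻¹ *
      (if lam / 2 ≤ ‖y‖ ∧ ‖y‖ ≤ lam then 1 else 0) * (‖y‖ ^ 4)⁻¹)
    (x : E6) {f : E6 → F} (hf : ∀ y, ‖f y‖ ≤ |g y| * (‖A (x - y)‖ ^ p)⁻¹) :
    ‖∫ y, f y‖ ≤ 16 * 2 ^ p *
      (6 * volume.real (Metric.ball (0 : E6) 1) * 3 ^ (n + 1) * (2 * 2 ^ p)) /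
        (lam ^ p + ‖x‖ ^ p) := by
  refine norm_integral_le_of_norm_le_riesz_kernel hpn (by positivity) hlam x ?_
  filter_upwards [hg] with y hy
  calc ‖f y‖ ≤ |g y| * (‖A (x - y)‖ ^ p)⁻¹ := hf y
    _ ≤ 16 * (lam ^ 6)⁻¹ * (Metric.closedBall (0 : E6) lam).indicator 1 y *
        (2 ^ p * (‖x - y‖ ^ p)⁻¹) :=
      mul_le_mul (hy.trans (shell_bound_le_indicator hlam y)) (inv_pow_norm_apply_le A hA p _)
        (by positivity) ((abs_nonneg _).trans (hy.trans (shell_bound_le_indicator hlam y)))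
    _ = _ := by
      by_cases hyl : y ∈ Metric.closedBall (0 : E6) lam
      · simp only [Set.indicator_of_mem hyl, Pi.one_apply]
        ring
      · simp only [Set.indicator_of_notMem hyl]
        ring

/-- Pointwise decay estimates for the Riesz-type potential built from the truncation
error of the three-body scattering solution, and for its gradient. -/
theorem riesz_potential_decay_estimates :
    ∃ C > 0, ∀ A : E6 ≃L[ℝ] E6,
      ‖(A : E6 →L[ℝ] E6)‖ ≤ 2 → ‖(A.symm : E6 →L[ℝ] E6)‖ ≤ 2 →
      ∀ lam : ℝ, 0 < lam →
      ∀ g : E6 → ℝ, Measurable g →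
      (∀ᵐ y ∂(volume : Measure E6),
        |g y| ≤ (lam ^ 2)⁻¹ *
          (if lam / 2 ≤ ‖y‖ ∧ ‖y‖ ≤ lam then 1 else 0) * (‖y‖ ^ 4)⁻¹) →
      (∀ x : E6,
        |∫ y : E6, g y * (‖A (x - y)‖ ^ 4)⁻¹| ≤ C / (lam ^ 4 + ‖x‖ ^ 4)) ∧
      (∀ x : E6,
        ‖∫ y : E6, g y • ((‖A (x - y)‖ ^ 6)⁻¹ • A (x - y))‖ ≤ C / (lam ^ 5 + ‖x‖ ^ 5)) := by
  set V : ℝ := volume.real (Metric.ball (0 : E6) 1) with hV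
  have hV0 : 0 < V :=
    ENNReal.toReal_pos (Metric.measure_ball_pos _ _ one_pos).ne' measure_ball_lt_top.ne
  refine ⟨16 * 2 ^ 5 * (6 * V * 3 ^ 2 * (2 * 2 ^ 5)), by positivity, ?_⟩
  intro A _ hA lam hlam g _ hg
  refine ⟨fun x => ?_, fun x => ?_⟩
  · rw [← Real.norm_eq_abs]
    refine (norm_integral_le_of_norm_le_shell_density (p := 4) (n := 1) rfl A hA hlam hg x
      fun y => ?_).trans ?_
    · simp
    · rw [← hV]
      gcongr <;> norm_num
  · refine (norm_integral_le_of_norm_le_shell_density (p := 5) (n := 0) rfl A hA hlam hg x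
      fun y => ?_).trans ?_
    · rw [norm_smul, norm_smul, Real.norm_eq_abs, norm_inv, norm_pow, norm_norm]
      rcases eq_or_ne ‖A (x - y)‖ 0 with h | h
      · rw [h]
        norm_num
      · gcongr
        apply le_of_eq
        field_simp
    · rw [← hV]
      gcongr <;> norm_num
end
end

section
/- Let R, B, L > 0, let W : ℝ⁶ → [0,∞) be integrable with support contained in the ball B(0,R) ⊆ ℝ⁶, and let g : ℝ³ → ℝ satisfy |g| ≤ B everywhere and |g(y) − g(x)| ≤ L|y − x| for all x, y ∈ ℝ³. Then for every real N > 0 and every x ∈ ℝ³, one has |N³ ∫_{ℝ³×ℝ³} W(N^{1/2}(x − y), N^{1/2}(x − z)) g(y) g(z) dy dz − (∫_{ℝ⁶} W) · g(x)²| ≤ 2 B L R (∫_{ℝ⁶} W) N^{−1/2}. -/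
open MeasureTheory

noncomputable section

local notation "E3" => EuclideanSpace ℝ (Fin 3)

/-- Translating and dilating the integration variable of an integral over a real
finite-dimensional space. -/
theorem pow_finrank_mul_integral_comp_smul_sub {E : Type*} [NormedAddCommGroup E]
    [NormedSpace ℝ E] [MeasurableSpace E] [BorelSpace E] [FiniteDimensional ℝ E]
    (μ : Measure E) [μ.IsAddHaarMeasure] (f : E → ℝ) {c : ℝ} (hc : 0 < c) (x : E) :
    c ^ Module.finrank ℝ E * ∫ p, f (c • (x - p)) ∂μ = ∫ q, f q ∂μ := by
  rw [integral_sub_left_eq_self (fun q => f (c • q)) μ x, Measure.integral_comp_smul,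
    abs_of_pos (by positivity), smul_eq_mul, mul_inv_cancel_left₀ (by positivity)]

/-- A product of two values of a bounded Lipschitz function, compared with the square of its
value at a nearby point. -/
theorem abs_mul_sub_sq_le {E : Type*} [SeminormedAddCommGroup E] {g : E → ℝ} {B L r : ℝ}
    (hL : 0 ≤ L) (hgB : ∀ x, |g x| ≤ B) (hgL : ∀ x y, |g y - g x| ≤ L * ‖y - x‖)
    {x y z : E} (hy : ‖y - x‖ ≤ r) (hz : ‖z - x‖ ≤ r) :
    |g y * g z - g x ^ 2| ≤ 2 * B * L * r := by
  have hB : 0 ≤ B := (abs_nonneg _).trans (hgB x)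
  have hy' : |g y - g x| ≤ L * r := (hgL x y).trans (by gcongr)
  have hz' : |g z - g x| ≤ L * r := (hgL x z).trans (by gcongr)
  calc |g y * g z - g x ^ 2| = |g y * (g z - g x) + g x * (g y - g x)| := by ring_nf
    _ ≤ |g y| * |g z - g x| + |g x| * |g y - g x| := by
      rw [← abs_mul, ← abs_mul]; exact abs_add_le _ _
    _ ≤ B * (L * r) + B * (L * r) := by gcongr <;> exact hgB _
    _ = 2 * B * L * r := by ring

/-- The rescaled interaction kernel `N³ W(N^{1/2}(x−y), N^{1/2}(x−z))` acts, up to an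
error of order `N^{-1/2}`, as the delta-like potential `(∫W) δ(x−y)δ(x−z)` when tested
against a bounded Lipschitz density `g`. -/
theorem delta_approximation_estimate (R B L : ℝ) (hR : 0 < R) (hB : 0 < B) (hL : 0 < L)
    (W : E3 → E3 → ℝ)
    (hWint : Integrable (Function.uncurry W))
    (hWnonneg : ∀ a b : E3, 0 ≤ W a b)
    (hWsupp : ∀ a b : E3, R ^ 2 ≤ ‖a‖ ^ 2 + ‖b‖ ^ 2 → W a b = 0)
    (g : E3 → ℝ)
    (hgB : ∀ x : E3, |g x| ≤ B)
    (hgL : ∀ x y : E3, |g y - g x| ≤ L * ‖y - x‖) :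
    ∀ N : ℝ, 0 < N → ∀ x : E3,
      |N ^ 3 * (∫ p : E3 × E3,
            W (Real.sqrt N • (x - p.1)) (Real.sqrt N • (x - p.2)) * g p.1 * g p.2)
          - (∫ p : E3 × E3, W p.1 p.2) * g x ^ 2|
        ≤ 2 * B * L * R * (∫ p : E3 × E3, W p.1 p.2) * N ^ (-(1 / 2) : ℝ) := by
  intro N hN x
  have hs : 0 < √N := Real.sqrt_pos.2 hN
  have hpow : N ^ (-(1 / 2) : ℝ) = (√N)⁻¹ := by
    rw [Real.rpow_neg hN.le, Real.sqrt_eq_rpow]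
  have hgc : Continuous g :=
    (LipschitzWith.of_dist_le_mul (K := ⟨L, hL.le⟩) fun a b => by
      rw [Real.dist_eq, dist_eq_norm]; exact hgL b a).continuous
  have hW : Integrable fun q : E3 × E3 => W q.1 q.2 := hWint
  let h : E3 × E3 → ℝ := fun q => g (x - (√N)⁻¹ • q.1) * g (x - (√N)⁻¹ • q.2)
  have hscale : N ^ 3 * (∫ p : E3 × E3,
      W (√N • (x - p.1)) (√N • (x - p.2)) * g p.1 * g p.2) = ∫ q : E3 × E3, W q.1 q.2 * h q := by
    have hdim : Module.finrank ℝ (E3 × E3) = 6 := by simp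
    have hN3 : N ^ 3 = √N ^ 6 := by
      rw [show (6 : ℕ) = 2 * 3 from rfl, pow_mul, Real.sq_sqrt hN.le]
    have : (volume : Measure (E3 × E3)).IsAddHaarMeasure :=
      Measure.prod.instIsAddHaarMeasure volume volume
    rw [← pow_finrank_mul_integral_comp_smul_sub volume (fun q : E3 × E3 => W q.1 q.2 * h q) hs
      (x, x), hdim, hN3]
    simp [h, inv_smul_smul₀ hs.ne', mul_assoc]
  have hWh : Integrable fun q : E3 × E3 => W q.1 q.2 * h q := by
    refine hW.mul_bdd (c := B * B) (Continuous.aestronglyMeasurable (by fun_prop))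
      (.of_forall fun q => ?_)
    rw [Real.norm_eq_abs, abs_mul]
    gcongr <;> exact hgB _
  have hbound : ∀ q : E3 × E3, ‖W q.1 q.2 * h q - W q.1 q.2 * g x ^ 2‖
      ≤ W q.1 q.2 * (2 * B * L * (R * (√N)⁻¹)) := by
    intro q
    rcases le_or_gt (R ^ 2) (‖q.1‖ ^ 2 + ‖q.2‖ ^ 2) with hq | hq
    · simp [hWsupp _ _ hq]
    have hclose : ∀ a : E3, ‖a‖ ^ 2 ≤ R ^ 2 → ‖x - (√N)⁻¹ • a - x‖ ≤ R * (√N)⁻¹ := by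
      intro a ha
      rw [sub_sub_cancel_left, norm_neg, norm_smul, Real.norm_of_nonneg (by positivity), mul_comm]
      gcongr
      exact le_of_sq_le_sq ha hR.le
    rw [← mul_sub, Real.norm_eq_abs, abs_mul, abs_of_nonneg (hWnonneg _ _)]
    exact mul_le_mul_of_nonneg_left (abs_mul_sub_sq_le hL.le hgB hgL
      (hclose _ (by nlinarith)) (hclose _ (by nlinarith))) (hWnonneg _ _)
  rw [hscale, hpow, ← integral_mul_const, ← integral_sub hWh (hW.mul_const _)]
  calc _ ≤ ∫ q : E3 × E3, W q.1 q.2 * (2 * B * L * (R * (√N)⁻¹)) :=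
        norm_integral_le_of_norm_le (hW.mul_const _) (.of_forall hbound)
    _ = _ := by rw [integral_mul_const]; ring
end
end
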